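/- arXiv:1901.07530 — 4 statements merged into one kernel-verified Lean document; each statement's English description precedes it below -/
import Mathlib

section
/- Let p, q ∈ P_n and define z = (z_1,…,z_n) by z_1 = min{p_1, q_1} and, for i = 2,…,n, z_i = min{∑_{j=1}^i p_j, ∑_{j=1}^i q_j} − ∑_{j=1}^{i−1} z_j (equivalently, ∑_{k=1}^i z_k = min{∑_{k=1}^i p_k, ∑_{k=1}^i q_k} for all i). Then z ∈ P_n, z ≼ p, z ≼ q, and every w ∈ P_n with w ≼ p and w ≼ q satisfies w ≼ z; i.e., z is the greatest lower bound p ∧ q of p and q in the partially ordered set (P_n, ≼). -/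
/-!
Passing to prefix sums turns majorization into the pointwise order. Prefix sums of a vector in
`P_n`, padded by zeros, form a sequence on `ℕ` that starts at `0`, is nondecreasing, is concave
(`prefSum_concave`) and equals `1` from index `n` on. All four properties survive pointwise
minima, and the prefix sums of `glbVec p q` telescope to the minimum of those of `p` and `q`
(`prefSum_glbVec`). Hence `glbVec p q` lies in `P_n`, and it is the greatest lower bound because
`min` is the greatest lower bound in the pointwise order.
-/

open Finset

/-- Sum of the first `i` components (0-indexed) of a vector; for `i ≥ n` this is the total
sum, which implements zero padding. -/
noncomputable def prefSum {n : ℕ} (p : Fin n → ℝ) (i : ℕ) : ℝ :=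
  ∑ k : Fin n, if (k : ℕ) < i then p k else 0

/-- Membership in `P_n`: sorted non-increasingly, nonnegative components, summing to 1. -/
def IsProbVec {n : ℕ} (p : Fin n → ℝ) : Prop :=
  (∀ i j : Fin n, i ≤ j → p j ≤ p i) ∧ (∀ i, 0 ≤ p i) ∧ (∑ i, p i) = 1

/-- Majorization `p ≼ q` (the shorter vector being padded with zeros). -/
def Maj {n m : ℕ} (p : Fin n → ℝ) (q : Fin m → ℝ) : Prop :=
  ∀ i : ℕ, prefSum p i ≤ prefSum q i
/-- The greatest lower bound `p ∧ q` in the majorization lattice `(P_n, ≼)`: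
`z₁ = min (p₁, q₁)` and `zᵢ = min (∑_{j≤i} pⱼ, ∑_{j≤i} qⱼ) − ∑_{j<i} zⱼ`, i.e. its prefix
sums are the minima of the corresponding prefix sums of `p` and `q`. -/
noncomputable def glbVec {n : ℕ} (p q : Fin n → ℝ) : Fin n → ℝ :=
  fun i => min (prefSum p ((i : ℕ) + 1)) (prefSum q ((i : ℕ) + 1)) -
    min (prefSum p (i : ℕ)) (prefSum q (i : ℕ))

theorem prefSum_zero {n : ℕ} (p : Fin n → ℝ) : prefSum p 0 = 0 := by
  simp [prefSum]

theorem prefSum_succ {n : ℕ} (p : Fin n → ℝ) (i : ℕ) :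
    prefSum p (i + 1) = prefSum p i + if h : i < n then p ⟨i, h⟩ else 0 := by
  unfold prefSum
  have key : (∑ k : Fin n, if (k : ℕ) = i then p k else 0) =
      if h : i < n then p ⟨i, h⟩ else 0 := by
    split_ifs with h
    · rw [Finset.sum_eq_single ⟨i, h⟩]
      · simp
      · intro b _ hb
        exact if_neg fun hbi => hb (Fin.ext hbi)
      · simp
    · refine Finset.sum_eq_zero fun k _ => if_neg ?_
      have := k.isLt
      omega
  rw [← key, ← Finset.sum_add_distrib]
  refine Finset.sum_congr rfl fun k _ => ?_
  rcases lt_trichotomy (k : ℕ) i with h | h | h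
  · simp [h, h.ne, Nat.lt_succ_of_lt h]
  · simp [h]
  · simp [h.ne', not_lt.2 h.le, not_lt.2 (Nat.succ_le_of_lt h)]

theorem prefSum_of_le {n : ℕ} (p : Fin n → ℝ) {i : ℕ} (hi : n ≤ i) :
    prefSum p i = ∑ k, p k :=
  Finset.sum_congr rfl fun k _ => if_pos (k.isLt.trans_le hi)

theorem prefSum_le_succ {n : ℕ} {p : Fin n → ℝ} (hp : IsProbVec p) (i : ℕ) :
    prefSum p i ≤ prefSum p (i + 1) := by
  rw [prefSum_succ]
  split_ifs with h
  · linarith [hp.2.1 ⟨i, h⟩]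
  · simp

/-- Monotonicity of the entries, together with nonnegativity at the padding boundary, makes the
prefix sums concave on all of `ℕ`. -/
theorem prefSum_concave {n : ℕ} {p : Fin n → ℝ} (hp : IsProbVec p) (i : ℕ) :
    prefSum p (i + 2) + prefSum p i ≤ 2 * prefSum p (i + 1) := by
  have h1 := prefSum_succ p i
  have h2 := prefSum_succ p (i + 1)
  by_cases hi : i + 1 < n
  · have hi' : i < n := by omega
    rw [dif_pos hi'] at h1
    rw [dif_pos hi] at h2
    have := hp.1 ⟨i, hi'⟩ ⟨i + 1, hi⟩ (by simp)
    linarith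
  · rw [dif_neg hi] at h2
    linarith [prefSum_le_succ hp i]

/-- The defining differences of `glbVec` telescope; beyond index `n` both sides are constant. -/
theorem prefSum_glbVec {n : ℕ} {p q : Fin n → ℝ} (i : ℕ) :
    prefSum (glbVec p q) i = min (prefSum p i) (prefSum q i) := by
  induction i with
  | zero => simp [prefSum_zero]
  | succ i ih =>
    rw [prefSum_succ, ih]
    split_ifs with h
    · simp [glbVec]
    · simp [prefSum_succ, h]

theorem isProbVec_glbVec {n : ℕ} {p q : Fin n → ℝ} (hp : IsProbVec p) (hq : IsProbVec q) :
    IsProbVec (glbVec p q) := by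
  refine ⟨fun i j hij => ?_, fun i => ?_, ?_⟩
  · have hanti : Antitone fun k : ℕ =>
        min (prefSum p (k + 1)) (prefSum q (k + 1)) - min (prefSum p k) (prefSum q k) := by
      refine antitone_nat_of_succ_le fun k => ?_
      have hP := prefSum_concave hp k
      have hQ := prefSum_concave hq k
      have h1 := min_le_left (prefSum p (k + 2)) (prefSum q (k + 2))
      have h2 := min_le_right (prefSum p (k + 2)) (prefSum q (k + 2))
      have h3 := min_le_left (prefSum p k) (prefSum q k)
      have h4 := min_le_right (prefSum p k) (prefSum q k)
      -- Bound the outer minima by the branch attaining the middle one.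
      rcases min_choice (prefSum p (k + 1)) (prefSum q (k + 1)) with h | h <;>
        · simp only [h, add_assoc, Nat.reduceAdd]
          linarith
    exact hanti (show (i : ℕ) ≤ j from hij)
  · exact sub_nonneg.2 (min_le_min (prefSum_le_succ hp i) (prefSum_le_succ hq i))
  · rw [← prefSum_of_le _ le_rfl, prefSum_glbVec, prefSum_of_le _ le_rfl,
      prefSum_of_le _ le_rfl, hp.2.2, hq.2.2, min_self]

/-- for `p, q ∈ P_n`, the vector `z = glbVec p q` (defined by
`z₁ = min (p₁,q₁)` and `zᵢ = min (∑_{j≤i} pⱼ, ∑_{j≤i} qⱼ) − ∑_{j<i} zⱼ`, equivalently by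
`∑_{k≤i} z_k = min (∑_{k≤i} p_k, ∑_{k≤i} q_k)` for all `i`) belongs to `P_n`, is majorized
by both `p` and `q`, and every `w ∈ P_n` majorized by both `p` and `q` is majorized by `z`;
i.e. `z` is the greatest lower bound `p ∧ q` in `(P_n, ≼)`. -/
theorem glbVec_isGLB {n : ℕ} (p q : Fin n → ℝ) (hp : IsProbVec p) (hq : IsProbVec q) :
    (∀ i : ℕ, prefSum (glbVec p q) i = min (prefSum p i) (prefSum q i)) ∧
    IsProbVec (glbVec p q) ∧ Maj (glbVec p q) p ∧ Maj (glbVec p q) q ∧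
    ∀ w : Fin n → ℝ, IsProbVec w → Maj w p → Maj w q → Maj w (glbVec p q) := by
  refine ⟨prefSum_glbVec, isProbVec_glbVec hp hq, fun i => ?_, fun i => ?_,
    fun w _ hwp hwq i => ?_⟩
  · rw [prefSum_glbVec]
    exact min_le_left _ _
  · rw [prefSum_glbVec]
    exact min_le_right _ _
  · rw [prefSum_glbVec]
    exact le_min (hwp i) (hwq i)
end

section
/- For any p ∈ P_n, q ∈ P_m, and any coupling M ∈ C(p,q), it holds that H(M) ≥ H(p ∧ q) ≥ max{H(p), H(q)} (this strengthens the classical bound H(X,Y) ≥ max{H(X), H(Y)}, and is strict in the second inequality whenever p ⋠ q and q ⋠ p). -/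
/-!
Every vector is viewed as a finitely supported sequence `ℕ → ℝ` (`zeroExt`), so that prefix
sums and entropies of vectors of different lengths become sums over `Finset.range`.

The analytic input is Schur concavity of the entropy in the following form (`entropy_le`): if `w` is
non-increasing, `w` and `z` are nonnegative with the same total, and the prefix sums of `w` are at
most those of `z`, then `H(z) ≤ H(w)`, with equality only for `z = w`. Indeed
`H(z) ≤ -∑ zᵢ log wᵢ ≤ -∑ wᵢ log wᵢ = H(w)`: the first step is Gibbs' inequality, the second is
summation by parts, as `log w` is non-increasing. Only `w` has to be sorted.

The prefix sums of `p ∧ q` are the minima of those of `p` and `q`. A minimum of two concave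
sequences is concave, so `p ∧ q` is sorted; taking `w = p ∧ q` and `z = p` or `z = q` gives
`H(p ∧ q) ≥ max (H(p), H(q))`, and equality forces `p ∧ q = p` or `p ∧ q = q`, that is, `p ≼ q` or
`q ≼ p`. For the coupling, take `w` to be the entries of `M` sorted non-increasingly and
`z = p ∧ q`: any `k` entries of `M` meet at most `k` rows, so their sum is at most the sum of the
`k` largest `pᵢ`, and likewise for columns (`sum_le_of_fibers`).
-/

open Finset

/-- Shannon entropy (base-2 logarithm, with the convention `0 · log (1/0) = 0`). -/
noncomputable def H2 {n : ℕ} (p : Fin n → ℝ) : ℝ :=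
  ∑ i, -(p i * Real.logb 2 (p i))
/-- `M ∈ C(p,q)`: a coupling of `p` and `q`. -/
def IsCoupling {n m : ℕ} (M : Fin n → Fin m → ℝ) (p : Fin n → ℝ) (q : Fin m → ℝ) : Prop :=
  (∀ i j, 0 ≤ M i j) ∧ (∀ i, (∑ j, M i j) = p i) ∧ (∀ j, (∑ i, M i j) = q j)

/-- Shannon entropy of the vector of entries of a matrix. -/
noncomputable def H2mat {n m : ℕ} (M : Fin n → Fin m → ℝ) : ℝ :=
  ∑ i, ∑ j, -(M i j * Real.logb 2 (M i j))
/-- Zero padding of a vector to length `N`. -/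
def padTo {n : ℕ} (p : Fin n → ℝ) (N : ℕ) : Fin N → ℝ :=
  fun i => if h : (i : ℕ) < n then p ⟨i, h⟩ else 0

/-! ### Vectors as finitely supported sequences -/

/-- The sequence obtained from a vector by padding with infinitely many zeros. -/
noncomputable def zeroExt {n : ℕ} (p : Fin n → ℝ) (i : ℕ) : ℝ :=
  if h : i < n then p ⟨i, h⟩ else 0

lemma zeroExt_of_le {n : ℕ} (p : Fin n → ℝ) {i : ℕ} (h : n ≤ i) : zeroExt p i = 0 := by
  simp [zeroExt, not_lt.2 h]

lemma zeroExt_val {n : ℕ} (p : Fin n → ℝ) (i : Fin n) : zeroExt p i = p i := by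
  simp [zeroExt]

lemma zeroExt_nonneg {n : ℕ} {p : Fin n → ℝ} (h : ∀ i, 0 ≤ p i) (i : ℕ) : 0 ≤ zeroExt p i := by
  unfold zeroExt; split_ifs
  · exact h _
  · exact le_rfl

lemma zeroExt_antitone {n : ℕ} {p : Fin n → ℝ} (h0 : ∀ i, 0 ≤ p i)
    (h : ∀ i j : Fin n, i ≤ j → p j ≤ p i) : Antitone (zeroExt p) := by
  intro i j hij
  by_cases hj : j < n
  · have hi : i < n := by omega
    simp only [zeroExt, hi, hj, dif_pos]
    exact h _ _ hij
  · rw [zeroExt_of_le p (by omega)]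
    exact zeroExt_nonneg h0 i

lemma sum_range_zeroExt {n K : ℕ} (p : Fin n → ℝ) (hK : n ≤ K) (f : ℝ → ℝ) (hf : f 0 = 0) :
    ∑ i ∈ range K, f (zeroExt p i) = ∑ i, f (p i) := by
  rw [← Finset.sum_subset (Finset.range_subset_range.2 hK), Finset.sum_range]
  · simp only [zeroExt_val]
  · intro x _ hx
    rw [zeroExt_of_le p (by simpa using hx), hf]

lemma H2_eq {n K : ℕ} (p : Fin n → ℝ) (hK : n ≤ K) :
    H2 p = (∑ i ∈ range K, Real.negMulLog (zeroExt p i)) / Real.log 2 := by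
  rw [sum_range_zeroExt p hK _ Real.negMulLog_zero, Finset.sum_div]
  refine Finset.sum_congr rfl fun i _ => ?_
  simp only [Real.negMulLog, Real.logb]
  ring

lemma prefSum_eq {n : ℕ} (p : Fin n → ℝ) (k : ℕ) :
    prefSum p k = ∑ i ∈ range k, zeroExt p i := by
  have h1 : prefSum p k = ∑ i ∈ range n, if i < k then zeroExt p i else 0 := by
    rw [Finset.sum_range]
    simp only [zeroExt_val, prefSum]
  have h2 : ∑ i ∈ range k, zeroExt p i = ∑ i ∈ range k, if i < n then zeroExt p i else 0 := by
    refine Finset.sum_congr rfl fun i _ => ?_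
    split_ifs with h
    · rfl
    · exact zeroExt_of_le p (by omega)
  rw [h1, h2, ← Finset.sum_filter, ← Finset.sum_filter]
  congr 1
  ext i
  simp [and_comm]

lemma prefSum_total {n k : ℕ} (p : Fin n → ℝ) (hk : n ≤ k) : prefSum p k = ∑ i, p i := by
  rw [prefSum_eq]
  exact sum_range_zeroExt p hk id rfl

lemma zeroExt_padTo {n N : ℕ} (p : Fin n → ℝ) (h : n ≤ N) : zeroExt (padTo p N) = zeroExt p := by
  funext i
  by_cases hi : i < N
  · simp [zeroExt, padTo, hi]
  · rw [zeroExt_of_le _ (by omega), zeroExt_of_le _ (by omega)]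

/-! ### Schur concavity of the entropy -/

/-- Summation by parts: weighting by a non-increasing sequence preserves domination of prefix sums
when the totals agree. -/
lemma abel_le (N : ℕ) (c w z : ℕ → ℝ) (hc : ∀ i, i + 1 < N → c (i + 1) ≤ c i)
    (hle : ∀ k ≤ N, ∑ i ∈ range k, w i ≤ ∑ i ∈ range k, z i)
    (heq : ∑ i ∈ range N, w i = ∑ i ∈ range N, z i) :
    0 ≤ ∑ i ∈ range N, c i * (z i - w i) := by
  -- The partial sums dominate `c k * (Z k - W k)`, a term that vanishes at the end.
  have key : ∀ k, k + 1 ≤ N → c k * (∑ i ∈ range (k + 1), z i - ∑ i ∈ range (k + 1), w i)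
      ≤ ∑ i ∈ range (k + 1), c i * (z i - w i) := by
    intro k
    induction k with
    | zero => intro _; simp
    | succ k ih =>
      intro hk
      have h1 := ih (by omega)
      have h2 := hc k (by omega)
      have h3 := hle (k + 1) (by omega)
      rw [Finset.sum_range_succ _ (k + 1), Finset.sum_range_succ _ (k + 1),
        Finset.sum_range_succ _ (k + 1)]
      nlinarith [mul_nonneg (sub_nonneg.2 h2) (sub_nonneg.2 h3)]
  rcases N with _ | N
  · simp
  · have := key N le_rfl
    rwa [heq, sub_self, mul_zero] at this

/-- The tangent line of `-x log x` at `w` lies strictly above the graph away from `w`. -/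
lemma negMulLog_tangent {w z : ℝ} (hw : 0 < w) (hz : 0 ≤ z) :
    Real.negMulLog z ≤ Real.negMulLog w - (1 + Real.log w) * (z - w) ∧
    (Real.negMulLog z = Real.negMulLog w - (1 + Real.log w) * (z - w) → z = w) := by
  rcases hz.eq_or_lt with rfl | hz
  · simp only [Real.negMulLog]
    constructor
    · simp; nlinarith
    · intro h; simp at h; nlinarith
  · have hlog : Real.log (w / z) = Real.log w - Real.log z := Real.log_div hw.ne' hz.ne'
    have hzw : z * (w / z) = w := by field_simp
    simp only [Real.negMulLog]
    constructor
    · have := Real.log_le_sub_one_of_pos (div_pos hw hz)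
      rw [hlog] at this
      nlinarith
    · intro h
      by_contra hne
      have := Real.log_lt_sub_one_of_pos (div_pos hw hz)
        (fun h1 => hne ((div_eq_one_iff_eq hz.ne').1 h1).symm)
      rw [hlog] at this
      nlinarith

/-- Schur concavity of the entropy, with its equality case; only the dominated sequence `w` is
assumed sorted. -/
lemma entropy_le (w z : ℕ → ℝ) (hw : Antitone w) (hw0 : ∀ i, 0 ≤ w i) (hz0 : ∀ i, 0 ≤ z i)
    (N : ℕ) (hle : ∀ k ≤ N, ∑ i ∈ range k, w i ≤ ∑ i ∈ range k, z i)
    (heq : ∑ i ∈ range N, w i = ∑ i ∈ range N, z i) :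
    ∑ i ∈ range N, Real.negMulLog (z i) ≤ ∑ i ∈ range N, Real.negMulLog (w i) ∧
    (∑ i ∈ range N, Real.negMulLog (z i) = ∑ i ∈ range N, Real.negMulLog (w i) →
      ∀ i < N, z i = w i) := by
  induction N with
  | zero => simp
  | succ N ih =>
    rcases (hw0 N).eq_or_lt with h0 | hpos
    · -- A vanishing last term of `w` forces that of `z` to vanish as well.
      have h1 := hle N (by omega)
      have h2 := heq
      rw [Finset.sum_range_succ, Finset.sum_range_succ, ← h0] at h2
      have hzN : z N = 0 := by have := hz0 N; linarith
      obtain ⟨ih1, ih2⟩ := ih (fun k hk => hle k (by omega)) (by linarith)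
      rw [Finset.sum_range_succ, Finset.sum_range_succ, ← h0, hzN]
      refine ⟨by linarith, fun h i hi => ?_⟩
      rcases Nat.lt_succ_iff_lt_or_eq.1 hi with hi | rfl
      · exact ih2 (by linarith) i hi
      · rw [hzN, h0]
    · have hwp : ∀ i < N + 1, 0 < w i := fun i hi => hpos.trans_le (hw (by omega))
      have hab := abel_le (N + 1) (fun i => 1 + Real.log (w i)) w z
        (fun i hi => by
          have := Real.log_le_log (hwp (i + 1) hi) (hw (Nat.le_succ i))
          simpa using this) hle heq
      have ht : ∀ i ∈ range (N + 1), Real.negMulLog (z i) ≤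
          Real.negMulLog (w i) - (1 + Real.log (w i)) * (z i - w i) := fun i hi =>
        (negMulLog_tangent (hwp i (Finset.mem_range.1 hi)) (hz0 i)).1
      have hsum := Finset.sum_le_sum ht
      have hs := Finset.sum_sub_distrib (s := range (N + 1)) (fun i => Real.negMulLog (w i))
        (fun i => (1 + Real.log (w i)) * (z i - w i))
      refine ⟨by linarith, fun h i hi => ?_⟩
      have hall := (Finset.sum_eq_sum_iff_of_le ht).1 (by linarith)
      exact (negMulLog_tangent (hwp i hi) (hz0 i)).2 (hall i (Finset.mem_range.2 hi))

/-! ### Prefix sums of marginals -/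

lemma sum_le_sum_range_card (a : ℕ → ℝ) (ha : Antitone a) (T : Finset ℕ) :
    ∑ i ∈ T, a i ≤ ∑ i ∈ range T.card, a i := by
  induction T using Finset.induction_on_max with
  | empty => simp
  | insert x T hx ih =>
    have hxT : x ∉ T := fun h => lt_irrefl _ (hx x h)
    have hcard : T.card ≤ x := by
      have : T ⊆ range x := fun y hy => Finset.mem_range.2 (hx y hy)
      simpa using Finset.card_le_card this
    rw [Finset.sum_insert hxT, Finset.card_insert_of_notMem hxT, Finset.sum_range_succ]
    linarith [ha hcard]

/-- If `p` is the marginal of a nonnegative weight `g` along `f`, then any at most `k` atoms of `g`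
weigh no more than the first `k` components of `p`, since they meet at most `k` fibers of `f`. -/
lemma sum_le_of_fibers {ι : Type*} [Fintype ι] {n : ℕ} {p : Fin n → ℝ}
    (hp : IsProbVec p) (f : ι → Fin n) (g : ι → ℝ) (hg : ∀ x, 0 ≤ g x)
    (hf : ∀ i, ∑ x with f x = i, g x = p i) (S : Finset ι) {k : ℕ} (hS : S.card ≤ k) :
    ∑ x ∈ S, g x ≤ prefSum p k := by
  classical
  calc ∑ x ∈ S, g x = ∑ i ∈ S.image f, ∑ x ∈ S with f x = i, g x :=
        (Finset.sum_fiberwise_of_maps_to (fun x hx => Finset.mem_image_of_mem f hx) g).symm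
    _ ≤ ∑ i ∈ S.image f, p i := by
        refine Finset.sum_le_sum fun i _ => ?_
        rw [← hf i]
        exact Finset.sum_le_sum_of_subset_of_nonneg
          (Finset.filter_subset_filter _ (Finset.subset_univ _)) fun x _ _ => hg x
    _ = ∑ i ∈ (S.image f).map Fin.valEmbedding, zeroExt p i := by
        rw [Finset.sum_map]
        exact Finset.sum_congr rfl fun i _ => (zeroExt_val p i).symm
    _ ≤ ∑ i ∈ range (S.image f).card, zeroExt p i := by
        simpa using sum_le_sum_range_card (zeroExt p) (zeroExt_antitone hp.2.1 hp.1)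
          ((S.image f).map Fin.valEmbedding)
    _ ≤ ∑ i ∈ range k, zeroExt p i :=
        Finset.sum_le_sum_of_subset_of_nonneg
          (Finset.range_subset_range.2 (Finset.card_image_le.trans hS))
          fun i _ _ => zeroExt_nonneg hp.2.1 i
    _ = prefSum p k := (prefSum_eq p k).symm

/-! ### The greatest lower bound -/

section glb

variable {n m : ℕ} {p : Fin n → ℝ} {q : Fin m → ℝ}

lemma prefSum_padTo {N : ℕ} (p : Fin n → ℝ) (h : n ≤ N) (k : ℕ) :
    prefSum (padTo p N) k = prefSum p k := by
  rw [prefSum_eq, prefSum_eq, zeroExt_padTo p h]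

lemma prefSum_succ_s5 (p : Fin n → ℝ) (k : ℕ) : prefSum p (k + 1) = prefSum p k + zeroExt p k := by
  rw [prefSum_eq, prefSum_eq, Finset.sum_range_succ]

lemma zeroExt_glb (i : ℕ) :
    zeroExt (glbVec (padTo p (max n m)) (padTo q (max n m))) i =
      min (prefSum p (i + 1)) (prefSum q (i + 1)) - min (prefSum p i) (prefSum q i) := by
  by_cases hi : i < max n m
  · simp [zeroExt, hi, glbVec, prefSum_padTo]
  · have h1 : n ≤ i := by omega
    have h2 : m ≤ i := by omega
    -- Beyond both lengths the prefix sums no longer change.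
    rw [zeroExt_of_le _ (by omega), prefSum_total p h1, prefSum_total q h2,
      prefSum_total p (by omega), prefSum_total q (by omega), sub_self]

lemma sum_glb (k : ℕ) :
    ∑ i ∈ range k, zeroExt (glbVec (padTo p (max n m)) (padTo q (max n m))) i =
      min (prefSum p k) (prefSum q k) := by
  simp only [zeroExt_glb]
  rw [Finset.sum_range_sub (fun i => min (prefSum p i) (prefSum q i))]
  simp [prefSum]

lemma glb_nonneg (hp : IsProbVec p) (hq : IsProbVec q) (i : ℕ) :
    0 ≤ zeroExt (glbVec (padTo p (max n m)) (padTo q (max n m))) i := by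
  rw [zeroExt_glb, sub_nonneg, prefSum_succ_s5, prefSum_succ_s5]
  exact min_le_min (by linarith [zeroExt_nonneg hp.2.1 i]) (by linarith [zeroExt_nonneg hq.2.1 i])

lemma glb_antitone (hp : IsProbVec p) (hq : IsProbVec q) :
    Antitone (zeroExt (glbVec (padTo p (max n m)) (padTo q (max n m)))) := by
  refine antitone_nat_of_succ_le fun i => ?_
  rw [zeroExt_glb, zeroExt_glb]
  have hp1 := zeroExt_antitone hp.2.1 hp.1 (Nat.le_succ i)
  have hq1 := zeroExt_antitone hq.2.1 hq.1 (Nat.le_succ i)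
  have hp2 := prefSum_succ_s5 p i
  have hp3 := prefSum_succ_s5 p (i + 1)
  have hq2 := prefSum_succ_s5 q i
  have hq3 := prefSum_succ_s5 q (i + 1)
  have a1 := min_le_left (prefSum p (i + 1 + 1)) (prefSum q (i + 1 + 1))
  have a2 := min_le_right (prefSum p (i + 1 + 1)) (prefSum q (i + 1 + 1))
  have b1 := min_le_left (prefSum p i) (prefSum q i)
  have b2 := min_le_right (prefSum p i) (prefSum q i)
  rcases min_choice (prefSum p (i + 1)) (prefSum q (i + 1)) with h | h <;> rw [h] <;>
    simp only [Nat.succ_eq_add_one] at hp1 hq1 <;> linarith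

/-- A vector `r` whose prefix sums dominate those of `p ∧ q` has entropy at most `H(p ∧ q)`, with
equality only if the prefix sums agree. -/
lemma H2_le_glb (hp : IsProbVec p) (hq : IsProbVec q) {l : ℕ} {r : Fin l → ℝ}
    (hr : IsProbVec r) (hle : ∀ k, min (prefSum p k) (prefSum q k) ≤ prefSum r k) :
    H2 r ≤ H2 (glbVec (padTo p (max n m)) (padTo q (max n m))) ∧
    (H2 r = H2 (glbVec (padTo p (max n m)) (padTo q (max n m))) →
      ∀ k, prefSum r k = min (prefSum p k) (prefSum q k)) := by
  set K := max l (max n m) with hK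
  have hlog : 0 < Real.log 2 := Real.log_pos one_lt_two
  obtain ⟨h1, h2⟩ := entropy_le _ (zeroExt r) (glb_antitone hp hq) (glb_nonneg hp hq)
    (zeroExt_nonneg hr.2.1) K
    (fun k _ => by rw [sum_glb, ← prefSum_eq]; exact hle k)
    (by rw [sum_glb, ← prefSum_eq, prefSum_total p (by omega), prefSum_total q (by omega),
          prefSum_total r (by omega), hp.2.2, hq.2.2, hr.2.2, min_self])
  rw [H2_eq (K := K) r (by omega), H2_eq (K := K) _ (by omega : max n m ≤ K)]
  refine ⟨div_le_div_of_nonneg_right h1 hlog.le, fun h k => ?_⟩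
  have hall := h2 ((div_left_inj' hlog.ne').1 h)
  rw [← sum_glb, prefSum_eq]
  refine Finset.sum_congr rfl fun i _ => ?_
  by_cases hi : i < K
  · exact hall i hi
  · rw [zeroExt_of_le _ (by omega), zeroExt_of_le _ (by omega)]

/-! ### Entropy of a coupling -/

lemma glb_le_H2mat (hp : IsProbVec p) (hq : IsProbVec q) {M : Fin n → Fin m → ℝ}
    (hM : IsCoupling M p q) :
    H2 (glbVec (padTo p (max n m)) (padTo q (max n m))) ≤ H2mat M := by
  obtain ⟨hM0, hMp, hMq⟩ := hM
  -- `e` enumerates the cells in non-increasing order of their entries.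
  let σ := Tuple.sort fun k : Fin (n * m) =>
    -M (finProdFinEquiv.symm k).1 (finProdFinEquiv.symm k).2
  let e : Fin (n * m) ≃ Fin n × Fin m := σ.trans finProdFinEquiv.symm
  let w : Fin (n * m) → ℝ := fun k => M (e k).1 (e k).2
  have hw0 : ∀ k, 0 ≤ w k := fun k => hM0 _ _
  have hwa : ∀ i j, i ≤ j → w j ≤ w i := fun i j hij =>
    neg_le_neg_iff.1 (Tuple.monotone_sort (fun k : Fin (n * m) =>
      -M (finProdFinEquiv.symm k).1 (finProdFinEquiv.symm k).2) hij)
  have hH : H2mat M = H2 w := by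
    unfold H2mat H2
    rw [← Fintype.sum_prod_type' (fun i j => -(M i j * Real.logb 2 (M i j)))]
    exact (e.sum_comp fun x : Fin n × Fin m => -(M x.1 x.2 * Real.logb 2 (M x.1 x.2))).symm
  have hrow : ∀ i, ∑ x with (e x).1 = i, w x = p i := by
    intro i
    rw [Finset.sum_filter,
      e.sum_comp (fun x : Fin n × Fin m => if x.1 = i then M x.1 x.2 else 0),
      Fintype.sum_prod_type, ← hMp i, Finset.sum_eq_single i]
    · simp
    · intro b _ hb; simp [hb]
    · simp
  have hcol : ∀ j, ∑ x with (e x).2 = j, w x = q j := by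
    intro j
    rw [Finset.sum_filter,
      e.sum_comp (fun x : Fin n × Fin m => if x.2 = j then M x.1 x.2 else 0),
      Fintype.sum_prod_type, ← hMq j]
    simp
  have htot : ∑ x, w x = 1 := by
    rw [← hp.2.2, ← Finset.sum_fiberwise univ (fun x => (e x).1) w]
    exact Finset.sum_congr rfl fun i _ => hrow i
  have hpre : ∀ k, prefSum w k ≤ min (prefSum p k) (prefSum q k) := by
    intro k
    have hc : (univ.filter fun x : Fin (n * m) => (x : ℕ) < k).card ≤ k := by
      have := Finset.card_le_card_of_injOn (s := univ.filter fun x : Fin (n * m) => (x : ℕ) < k)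
        (t := range k) (fun x => (x : ℕ)) (fun x hx => by simpa using hx)
        (fun x _ y _ h => Fin.ext h)
      simpa using this
    rw [prefSum, ← Finset.sum_filter]
    exact le_min (sum_le_of_fibers hp (fun x => (e x).1) w hw0 hrow _ hc)
      (sum_le_of_fibers hq (fun x => (e x).2) w hw0 hcol _ hc)
  set K := max (n * m) (max n m) with hK
  have h1 := (entropy_le (zeroExt w) _ (zeroExt_antitone hw0 hwa) (zeroExt_nonneg hw0)
    (glb_nonneg hp hq) K (fun k _ => by rw [sum_glb, ← prefSum_eq]; exact hpre k)
    (by rw [sum_glb, ← prefSum_eq, prefSum_total p (by omega), prefSum_total q (by omega),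
          prefSum_total w (le_max_left _ _), hp.2.2, hq.2.2, htot, min_self])).1
  rw [hH, H2_eq (K := K) w (le_max_left _ _), H2_eq (K := K) _ (le_max_right _ _)]
  exact div_le_div_of_nonneg_right h1 (Real.log_pos one_lt_two).le

end glb

/-- for any `p ∈ P_n`, `q ∈ P_m` and any coupling `M ∈ C(p,q)`,
`H(M) ≥ H(p ∧ q) ≥ max (H(p), H(q))`, the second inequality being strict whenever
`p ⋠ q` and `q ⋠ p`. -/
theorem coupling_entropy_improved_bound {n m : ℕ} (p : Fin n → ℝ) (q : Fin m → ℝ)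
    (hp : IsProbVec p) (hq : IsProbVec q)
    (M : Fin n → Fin m → ℝ) (hM : IsCoupling M p q) :
    H2mat M ≥ H2 (glbVec (padTo p (max n m)) (padTo q (max n m))) ∧
    H2 (glbVec (padTo p (max n m)) (padTo q (max n m))) ≥ max (H2 p) (H2 q) ∧
    (¬ Maj p q → ¬ Maj q p →
      H2 (glbVec (padTo p (max n m)) (padTo q (max n m))) > max (H2 p) (H2 q)) := by
  obtain ⟨hp1, hp2⟩ := H2_le_glb hp hq hp fun k => min_le_left _ _
  obtain ⟨hq1, hq2⟩ := H2_le_glb hp hq hq fun k => min_le_right _ _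
  refine ⟨glb_le_H2mat hp hq hM, max_le hp1 hq1, fun hpq hqp => max_lt ?_ ?_⟩
  · exact lt_of_le_of_ne hp1 fun h => hpq fun k => min_eq_left_iff.1 (hp2 h k).symm
  · exact lt_of_le_of_ne hq1 fun h => hqp fun k => min_eq_right_iff.1 (hq2 h k).symm
end

section
/- Let p ∈ P_n and let q be obtained from an aggregation of p by padding with zeros to length n and sorting in non-increasing order. Then H(p) ≥ H(q) + D(q‖p), where D(q‖p) = ∑_{i : q_i > 0} q_i log(q_i / p_i) is the relative entropy (which is well defined since q_i > 0 implies p_i > 0). In particular, for a discrete random variable Z with finitely many values and any deterministic function f, H(Z) ≥ H(f(Z)) + D(f(Z)‖Z), the divergence being taken between the sorted probability vectors of f(Z) and Z. -/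
/-!
Since `q i > 0` forces `p i > 0`, the right-hand side `H(q) + D(q‖p)` equals `-∑ q i * log (p i)`,
so the claim is `∑ p i * log (p i) ≤ ∑ q i * log (p i)`. Both this inequality and the implication
`q i > 0 → p i > 0` are instances of one fact (`sum_mul_le_of_aggregation`): for *every* antitone
weight `L`, `∑ p i * L i ≤ ∑ q i * L i`. To see it, replace each `L i` by its largest value
`L (r (φ i))` on the fibre of `φ` containing `i`; the left side becomes `∑ q j * L (r j)`, where `r`
is injective on the range of `φ`, and the rearrangement inequality finishes.

The random-variable form reduces to the aggregation form by matching the nonzero masses of `f(Z)`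
with the nonzero entries of `q` (`exists_aggregation_map`).
-/

open Finset

/-- Kullback–Leibler divergence `D(q‖p) = ∑_{i : q_i > 0} q_i log₂ (q_i / p_i)`. -/
noncomputable def KL {n : ℕ} (q p : Fin n → ℝ) : ℝ :=
  ∑ i, if 0 < q i then q i * Real.logb 2 (q i / p i) else 0

/-- A sorted aggregation `q` of `p` majorizes `p`, tested against an arbitrary non-increasing
weight `L`. The vector `p` itself need not be sorted. -/
lemma sum_mul_le_of_aggregation {n : ℕ} {p q L : Fin n → ℝ} (hp : ∀ i, 0 ≤ p i)
    (hq : Antitone q) (hL : Antitone L) (φ : Fin n → Fin n)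
    (hφ : ∀ j, q j = ∑ i ∈ Finset.univ.filter (fun i => φ i = j), p i) :
    ∑ i, p i * L i ≤ ∑ i, q i * L i := by
  classical
  have hr : ∀ j, ∃ k, j ∈ Finset.univ.image φ → φ k = j ∧ ∀ i, φ i = j → L i ≤ L k := by
    intro j
    by_cases hj : j ∈ Finset.univ.image φ
    · obtain ⟨i, -, hi⟩ := Finset.mem_image.mp hj
      obtain ⟨k, hk, hmax⟩ := Finset.exists_max_image
        (Finset.univ.filter (fun i => φ i = j)) L ⟨i, by simpa using hi⟩
      exact ⟨k, fun _ => ⟨by simpa using hk, fun i hi => hmax i (by simpa using hi)⟩⟩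
    · exact ⟨j, fun h => absurd h hj⟩
  choose r hr using hr
  have hinj : Set.InjOn r (Finset.univ.image φ : Finset (Fin n)) := by
    intro a ha b hb hab
    rw [← (hr a ha).1, hab, (hr b hb).1]
  obtain ⟨σ, hσ⟩ := Finset.exists_equiv_extend_of_card_eq (t := Finset.univ) (by simp)
    (Finset.subset_univ _) hinj
  let τ : Equiv.Perm (Fin n) := σ.trans (Equiv.subtypeUnivEquiv (fun _ => Finset.mem_univ _))
  have hτ : ∀ j ∈ Finset.univ.image φ, τ j = r j := hσ
  calc ∑ i, p i * L i ≤ ∑ i, p i * L (τ (φ i)) := by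
        refine Finset.sum_le_sum fun i _ => mul_le_mul_of_nonneg_left ?_ (hp i)
        have hi : φ i ∈ Finset.univ.image φ := Finset.mem_image_of_mem _ (Finset.mem_univ _)
        rw [hτ _ hi]
        exact (hr _ hi).2 i rfl
    _ = ∑ j, q j * L (τ j) := by
        rw [← Finset.sum_fiberwise Finset.univ φ]
        refine Finset.sum_congr rfl fun j _ => ?_
        rw [hφ j, Finset.sum_mul]
        refine Finset.sum_congr rfl fun i hi => ?_
        rw [(Finset.mem_filter.mp hi).2]
    _ ≤ ∑ j, q j * L j := (hq.monovary hL).sum_mul_comp_perm_le_sum_mul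

lemma pos_of_aggregation_pos {n : ℕ} {p q : Fin n → ℝ} (hp : IsProbVec p) (hq : IsProbVec q)
    (φ : Fin n → Fin n)
    (hφ : ∀ j, q j = ∑ i ∈ Finset.univ.filter (fun i => φ i = j), p i)
    (i : Fin n) (hi : 0 < q i) : 0 < p i := by
  classical
  by_contra hpi
  -- The indicator of the support of `p` is antitone, and `p` gives it full mass.
  have hL : Antitone (fun k => if 0 < p k then (1 : ℝ) else 0) := by
    intro a b hab
    have := hp.1 a b hab
    dsimp only
    split_ifs <;> linarith
  have h := sum_mul_le_of_aggregation hp.2.1 (fun a b => hq.1 a b) hL φ hφ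
  have h1 : ∑ k, p k * (if 0 < p k then (1 : ℝ) else 0) = 1 := by
    refine Eq.trans ?_ hp.2.2
    refine Finset.sum_congr rfl fun k _ => ?_
    have := hp.2.1 k
    split_ifs <;> linarith
  have h2 : ∑ k, q k * (if 0 < p k then (1 : ℝ) else 0) < ∑ k, q k := by
    refine Finset.sum_lt_sum (fun k _ => ?_) ⟨i, Finset.mem_univ _, by simpa [hpi] using hi⟩
    have := hq.2.1 k
    split_ifs <;> linarith
  rw [hq.2.2] at h2
  linarith

lemma entropy_ge_of_aggregation {n : ℕ} {p q : Fin n → ℝ} (hp : IsProbVec p) (hq : IsProbVec q)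
    (φ : Fin n → Fin n)
    (hφ : ∀ j, q j = ∑ i ∈ Finset.univ.filter (fun i => φ i = j), p i) :
    H2 p ≥ H2 q + KL q p := by
  classical
  have hpos := pos_of_aggregation_pos hp hq φ hφ
  -- `logb 2 0 = 0` breaks monotonicity of `logb 2 (p i)`, so off the support of `p` it is
  -- replaced by a lower bound `-C` for all the logarithms; `p` and `q` vanish there.
  set C : ℝ := ∑ k, |Real.logb 2 (p k)|
  have hbound : ∀ k, -C ≤ Real.logb 2 (p k) := fun k => by
    have h1 : |Real.logb 2 (p k)| ≤ C := Finset.single_le_sum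
      (f := fun k => |Real.logb 2 (p k)|) (fun _ _ => abs_nonneg _) (Finset.mem_univ k)
    have h2 := neg_abs_le (Real.logb 2 (p k))
    linarith
  have hL : Antitone (fun k => if 0 < p k then Real.logb 2 (p k) else -C) := by
    intro a b hab
    have hle := hp.1 a b hab
    dsimp only
    split_ifs with hb ha ha
    · exact Real.logb_le_logb_of_le (by norm_num) hb hle
    · linarith
    · exact hbound a
    · exact le_rfl
  have h := sum_mul_le_of_aggregation hp.2.1 (fun a b => hq.1 a b) hL φ hφ
  have h1 : H2 p = -∑ k, p k * (if 0 < p k then Real.logb 2 (p k) else -C) := by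
    rw [H2, ← Finset.sum_neg_distrib]
    refine Finset.sum_congr rfl fun k _ => ?_
    split_ifs with hk
    · rfl
    · simp [le_antisymm (not_lt.mp hk) (hp.2.1 k)]
  have h2 : H2 q + KL q p = -∑ k, q k * (if 0 < p k then Real.logb 2 (p k) else -C) := by
    rw [H2, KL, ← Finset.sum_neg_distrib, ← Finset.sum_add_distrib]
    refine Finset.sum_congr rfl fun k _ => ?_
    by_cases hk : 0 < q k
    · rw [if_pos hk, if_pos (hpos k hk), Real.logb_div hk.ne' (hpos k hk).ne']
      ring
    · simp [le_antisymm (not_lt.mp hk) (hq.2.1 k)]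
  rw [h1, h2]
  linarith

/-- If the nonzero entries of `q` are, with multiplicity, the nonzero masses of the image of `w`
under `f`, then `q` itself is an aggregation of `w`. Points whose image has mass zero carry no
weight, so they may be sent anywhere. -/
lemma exists_aggregation_map {N K : ℕ} {w q : Fin N → ℝ} {f : Fin N → Fin K}
    (hw : ∀ a, 0 ≤ w a)
    (hcard : ∀ x : ℝ, x ≠ 0 →
      (Finset.univ.filter (fun j : Fin N => q j = x)).card =
        (Finset.univ.filter (fun b : Fin K =>
          (∑ a ∈ Finset.univ.filter (fun a => f a = b), w a) = x)).card) :
    ∃ φ : Fin N → Fin N, ∀ j, q j = ∑ a ∈ Finset.univ.filter (fun a => φ a = j), w a := by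
  classical
  set s : Fin K → ℝ := fun b => ∑ a ∈ Finset.univ.filter (fun a => f a = b), w a
  have hw0 : ∀ a, s (f a) = 0 → w a = 0 := fun a ha =>
    (Finset.sum_eq_zero_iff_of_nonneg (fun i _ => hw i)).mp ha a (by simp)
  have E : ∀ x : ℝ, Nonempty ({b : {b // s b ≠ 0} // s b.1 = x} ≃
      {j : {j // q j ≠ 0} // q j.1 = x}) := by
    intro x
    by_cases hx : x = 0
    · have : IsEmpty {b : {b // s b ≠ 0} // s b.1 = x} := ⟨fun b => b.1.2 (b.2.trans hx)⟩
      have : IsEmpty {j : {j // q j ≠ 0} // q j.1 = x} := ⟨fun b => b.1.2 (b.2.trans hx)⟩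
      exact ⟨Equiv.equivOfIsEmpty _ _⟩
    · have e1 : {b : {b // s b ≠ 0} // s b.1 = x} ≃ {b // s b = x} :=
        Equiv.subtypeSubtypeEquivSubtype (p := fun b => s b ≠ 0) (q := fun b => s b = x)
          (fun h => by rw [h]; exact hx)
      have e2 : {j : {j // q j ≠ 0} // q j.1 = x} ≃ {j // q j = x} :=
        Equiv.subtypeSubtypeEquivSubtype (p := fun j => q j ≠ 0) (q := fun j => q j = x)
          (fun h => by rw [h]; exact hx)
      have e3 : {b // s b = x} ≃ {j // q j = x} := Fintype.equivOfCardEq (by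
        rw [Fintype.card_subtype, Fintype.card_subtype]
        exact (hcard x hx).symm)
      exact ⟨e1.trans (e3.trans e2.symm)⟩
  let e : {b // s b ≠ 0} ≃ {j // q j ≠ 0} :=
    Equiv.ofFiberEquiv (f := fun b : {b // s b ≠ 0} => s b.1)
      (g := fun j : {j // q j ≠ 0} => q j.1) (fun x => (E x).some)
  have he : ∀ b, q (e b).1 = s b.1 := fun b => Equiv.ofFiberEquiv_map (fun x => (E x).some) b
  refine ⟨fun a => if h : s (f a) ≠ 0 then (e ⟨f a, h⟩).1 else a, fun j => ?_⟩
  by_cases hj : q j = 0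
  · rw [hj]
    refine (Finset.sum_eq_zero fun a ha => ?_).symm
    have ha := (Finset.mem_filter.mp ha).2
    by_cases h : s (f a) = 0
    · exact hw0 a h
    · dsimp only at ha
      rw [dif_pos h] at ha
      exact absurd hj (ha ▸ (e ⟨f a, h⟩).2)
  · obtain ⟨b, hb⟩ := e.surjective ⟨j, hj⟩
    have hqj : q j = s b.1 := by rw [← he b, hb]
    rw [hqj, show s b.1 = ∑ a ∈ Finset.univ.filter (fun a => f a = b.1), w a from rfl,
      Finset.sum_filter, Finset.sum_filter]
    refine Finset.sum_congr rfl fun a _ => ?_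
    by_cases h : s (f a) = 0
    · simp [hw0 a h]
    · have key : (if h : s (f a) ≠ 0 then (e ⟨f a, h⟩).1 else a) = j ↔ f a = b.1 := by
        rw [dif_pos h]
        constructor
        · intro h'
          have : e ⟨f a, h⟩ = e b := by rw [hb]; exact Subtype.ext h'
          exact congrArg Subtype.val (e.injective this)
        · intro h'
          have : (⟨f a, h⟩ : {b // s b ≠ 0}) = b := Subtype.ext h'
          rw [this, hb]
      exact (if_congr key rfl rfl).symm

/-- Part 1: if `p ∈ P_n` and `q ∈ P_n` is obtained from an aggregation of `p` by zero padding to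
length `n` and sorting non-increasingly (equivalently: `q` is sorted and there is
`φ : Fin n → Fin n` with `q j = ∑_{i : φ i = j} p i`), then `H(p) ≥ H(q) + D(q‖p)`.
Part 2: for a random variable `Z` with finitely many values, of distribution `w` on `Fin N`,
and any deterministic function `f`, `H(Z) ≥ H(f(Z)) + D(f(Z)‖Z)`, the entropies and the
divergence being taken between the sorted probability vectors `p` of `Z` and `q` of `f(Z)`
(padded with zeros to length `N`). -/
theorem entropy_aggregation_relative_entropy :
    (∀ (n : ℕ) (p q : Fin n → ℝ), IsProbVec p → IsProbVec q →
      (∃ φ : Fin n → Fin n, ∀ j, q j = ∑ i ∈ Finset.univ.filter (fun i => φ i = j), p i) →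
      H2 p ≥ H2 q + KL q p) ∧
    (∀ (N K : ℕ) (w : Fin N → ℝ) (f : Fin N → Fin K) (p q : Fin N → ℝ),
      (∀ a, 0 ≤ w a) → (∑ a, w a) = 1 →
      IsProbVec p → (∃ σ : Equiv.Perm (Fin N), ∀ i, p i = w (σ i)) →
      IsProbVec q →
      (∀ x : ℝ, x ≠ 0 →
        (Finset.univ.filter (fun j : Fin N => q j = x)).card =
          (Finset.univ.filter (fun b : Fin K =>
            (∑ a ∈ Finset.univ.filter (fun a => f a = b), w a) = x)).card) →
      H2 p ≥ H2 q + KL q p) := by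
  refine ⟨fun n p q hp hq ⟨φ, hφ⟩ => entropy_ge_of_aggregation hp hq φ hφ, ?_⟩
  rintro N K w f p q hw - hp ⟨σ, hσ⟩ hq hcard
  obtain ⟨φ, hφ⟩ := exists_aggregation_map hw hcard
  refine entropy_ge_of_aggregation hp hq (φ ∘ σ) fun j => ?_
  rw [hφ j, Finset.sum_filter, Finset.sum_filter,
    ← Equiv.sum_comp σ (fun a => if φ a = j then w a else 0)]
  simp [hσ]
end

section
/- Let A[1…k] be an array of k nonnegative real numbers and let z be a positive real number such that z ≥ A[i] for each i = 1,…,k. Then for any x ≥ 0 with x ≤ z + ∑_{i=1}^k A[i], there exists a subset I ⊆ {1,…,k} and a real number z^{(d)} with 0 ≤ z^{(d)} ≤ z such that z^{(d)} + ∑_{i∈I} A[i] = x. -/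
/-!
Induct on the set of available indices, for all `x` at once. When an index `a` is added to `s`,
either `x ≤ z + ∑ i ∈ s, A i` and `a` is not needed, or `x > z + ∑ i ∈ s, A i ≥ z ≥ A a`; in the
latter case `x - A a` is nonnegative and at most `z + ∑ i ∈ s, A i`, so it can be filled from `s`,
and `a` is then added to the chosen subset.
-/

open Finset

/-- The containment `I ⊆ s` guarantees that an index added in the inductive step is new to `I`. -/
lemma exists_subset_sum_fill_finset {ι : Type*} [DecidableEq ι] (A : ι → ℝ) (hA : ∀ i, 0 ≤ A i)
    (z : ℝ) (hAz : ∀ i, A i ≤ z) (s : Finset ι) :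
    ∀ x : ℝ, 0 ≤ x → x ≤ z + ∑ i ∈ s, A i →
      ∃ I ⊆ s, ∃ zd : ℝ, 0 ≤ zd ∧ zd ≤ z ∧ zd + ∑ i ∈ I, A i = x := by
  induction s using Finset.induction_on with
  | empty =>
    intro x hx0 hx
    exact ⟨∅, subset_rfl, x, hx0, by simpa using hx, by simp⟩
  | insert a s ha ih =>
    intro x hx0 hx
    rw [Finset.sum_insert ha] at hx
    by_cases h : x ≤ z + ∑ i ∈ s, A i
    · obtain ⟨I, hI, zd, h0, h1, h2⟩ := ih x hx0 h
      exact ⟨I, hI.trans (Finset.subset_insert a s), zd, h0, h1, h2⟩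
    · have hs : 0 ≤ ∑ i ∈ s, A i := Finset.sum_nonneg fun i _ => hA i
      obtain ⟨I, hI, zd, h0, h1, h2⟩ :=
        ih (x - A a) (by linarith [hAz a]) (by linarith)
      refine ⟨insert a I, Finset.insert_subset_insert a hI, zd, h0, h1, ?_⟩
      rw [Finset.sum_insert fun h => ha (hI h)]
      linarith

/-- given nonnegative reals `A 1, …, A k`, a positive real `z` with `z ≥ A i`
for every `i`, and any `x` with `0 ≤ x ≤ z + ∑ i, A i`, there are a subset
`I ⊆ {1,…,k}` and a real `z⁽ᵈ⁾` with `0 ≤ z⁽ᵈ⁾ ≤ z` and `z⁽ᵈ⁾ + ∑_{i ∈ I} A i = x`. -/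
theorem exists_subset_sum_fill {k : ℕ} (A : Fin k → ℝ) (hA : ∀ i, 0 ≤ A i)
    (z : ℝ) (hz : 0 < z) (hAz : ∀ i, A i ≤ z)
    (x : ℝ) (hx0 : 0 ≤ x) (hx : x ≤ z + ∑ i, A i) :
    ∃ (I : Finset (Fin k)) (zd : ℝ), 0 ≤ zd ∧ zd ≤ z ∧ zd + ∑ i ∈ I, A i = x := by
  obtain ⟨I, -, h⟩ := exists_subset_sum_fill_finset A hA z hAz Finset.univ x hx0 hx
  exact ⟨I, h⟩
end
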